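/- arXiv:1209.0910 — 6 statements merged into one kernel-verified Lean document; each statement's English description precedes it below -/
import Mathlib

section
/- Let A > 0 and Δθ, z ∈ ℝ. Set a = (A − Δθ)/√(2πA), b = (A + Δθ)/√(2πA) and η = (π/2)a² − z. Then √(2A)/√π · Θ(A; Δθ, z) = (S(a) + S(b))·cos η − (C(a) + C(b))·sin η. -/
/-!
Completing the square gives `Aτ² + (Δθ − A)τ + z = (π/2)(cτ − a)² − η` with `c = √(2A)/√π`, because
`π c² = 2A` and `π c a = A − Δθ`. Since moreover `c − a = b`, the substitution `u = cτ − a` turns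
`c · Θ` into `∫ u in -a..b, sin ((π/2)u² − η)`. The subtraction formula for `sin`, together with the
oddness of `S` and `C` (`fresnelS_add`, `fresnelC_add`), yields the result.
-/

open Real

/-- The generalized Fresnel integral `Θ(A; Δθ, Δφ) = ∫₀¹ sin(Aτ² + (Δθ − A)τ + Δφ) dτ`. -/
noncomputable def Theta (A dtheta dphi : ℝ) : ℝ :=
  ∫ τ in (0:ℝ)..1, Real.sin (A * τ^2 + (dtheta - A) * τ + dphi)

/-- The Fresnel cosine integral `C(t) = ∫₀ᵗ cos(πτ²/2) dτ`. -/
noncomputable def fresnelC (t : ℝ) : ℝ := ∫ τ in (0:ℝ)..t, Real.cos (π/2 * τ^2)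

/-- The Fresnel sine integral `S(t) = ∫₀ᵗ sin(πτ²/2) dτ`. -/
noncomputable def fresnelS (t : ℝ) : ℝ := ∫ τ in (0:ℝ)..t, Real.sin (π/2 * τ^2)

/-- The integrand of `S` is even, so `S` is odd and `S(a) + S(b) = S(b) - S(-a)`. -/
lemma fresnelS_add (a b : ℝ) :
    fresnelS a + fresnelS b = ∫ u in (-a)..b, Real.sin (π/2 * u^2) := by
  have hc : Continuous fun u : ℝ => Real.sin (π/2 * u^2) := by fun_prop
  have h := intervalIntegral.integral_comp_neg (a := 0) (b := a)
    (fun u : ℝ => Real.sin (π/2 * u^2))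
  simp only [neg_sq, neg_zero] at h
  unfold fresnelS
  rw [h]
  exact intervalIntegral.integral_add_adjacent_intervals
    (hc.intervalIntegrable _ _) (hc.intervalIntegrable _ _)

/-- The integrand of `C` is even, so `C` is odd and `C(a) + C(b) = C(b) - C(-a)`. -/
lemma fresnelC_add (a b : ℝ) :
    fresnelC a + fresnelC b = ∫ u in (-a)..b, Real.cos (π/2 * u^2) := by
  have hc : Continuous fun u : ℝ => Real.cos (π/2 * u^2) := by fun_prop
  have h := intervalIntegral.integral_comp_neg (a := 0) (b := a)
    (fun u : ℝ => Real.cos (π/2 * u^2))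
  simp only [neg_sq, neg_zero] at h
  unfold fresnelC
  rw [h]
  exact intervalIntegral.integral_add_adjacent_intervals
    (hc.intervalIntegrable _ _) (hc.intervalIntegrable _ _)

/-- For `A > 0`, `√(2A)/√π · Θ(A; Δθ, z) = (S(a)+S(b))cos η − (C(a)+C(b))sin η`
where `a = (A−Δθ)/√(2πA)`, `b = (A+Δθ)/√(2πA)` and `η = (π/2)a² − z`. -/
theorem theta_via_fresnel (A dtheta z : ℝ) (hA : 0 < A)
    (a b η : ℝ)
    (ha : a = (A - dtheta) / Real.sqrt (2*π*A))
    (hb : b = (A + dtheta) / Real.sqrt (2*π*A))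
    (hη : η = π/2 * a^2 - z) :
    Real.sqrt (2*A) / Real.sqrt π * Theta A dtheta z =
      (fresnelS a + fresnelS b) * Real.cos η - (fresnelC a + fresnelC b) * Real.sin η := by
  have hpi := Real.pi_pos
  have hsplit : Real.sqrt (2*π*A) = Real.sqrt (2*A) * Real.sqrt π := by
    rw [← Real.sqrt_mul (by positivity)]
    ring_nf
  rw [hsplit] at ha hb
  have hp : 0 < Real.sqrt (2*A) := Real.sqrt_pos.mpr (by positivity)
  have hq : 0 < Real.sqrt π := Real.sqrt_pos.mpr hpi
  have hp2 : Real.sqrt (2*A) ^ 2 = 2*A := Real.sq_sqrt (by positivity)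
  have hq2 : Real.sqrt π ^ 2 = π := Real.sq_sqrt hpi.le
  generalize Real.sqrt (2*A) = p at *
  generalize Real.sqrt π = q at *
  obtain ⟨c, hc⟩ : ∃ c, c = p / q := ⟨_, rfl⟩
  rw [← hc]
  have hcc : π * c^2 = 2*A := by
    rw [hc, div_pow, hq2, hp2]
    field_simp
  have hca : π * (c * a) = A - dtheta := by
    rw [hc, ha, ← hq2]
    field_simp
  have hcb : c * 1 + -a = b := by
    rw [hc, ha, hb]
    field_simp
    linear_combination hp2
  have hsub := intervalIntegral.smul_integral_comp_mul_add (a := 0) (b := 1)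
    (fun u : ℝ => Real.sin (π/2 * u^2 - η)) c (-a)
  rw [hcb, mul_zero, zero_add, smul_eq_mul] at hsub
  have hT : Theta A dtheta z = ∫ τ in (0:ℝ)..1, Real.sin (π/2 * (c * τ + -a)^2 - η) := by
    unfold Theta
    congr 1 with τ
    congr 1
    rw [hη]
    linear_combination (-τ^2/2) * hcc + τ * hca
  rw [hT, hsub, fresnelS_add, fresnelC_add, ← intervalIntegral.integral_mul_const,
    ← intervalIntegral.integral_mul_const, ← intervalIntegral.integral_sub]
  · simp only [Real.sin_sub]
  · exact Continuous.intervalIntegrable (by fun_prop) _ _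
  · exact Continuous.intervalIntegrable (by fun_prop) _ _
end

section
/- Let (x₀, y₀), (x₁, y₁) be points in ℝ² and θ₀, θ₁ ∈ ℝ angles. Suppose r > 0 and φ ∈ ℝ satisfy x₁ − x₀ = r·cos φ and y₁ − y₀ = r·sin φ, and set Δθ = θ₁ − θ₀ and Δφ = θ₀ − φ. Let A ∈ ℝ be a root of g, i.e. Θ(A; Δθ, Δφ) = 0, let h = Θ(A; Δθ, Δφ + π/2) and assume h ≠ 0. Define L = r/h, κ = (Δθ − A)/L and κ' = 2A/L². Then x₀ + ∫₀^L cos((1/2)κ's² + κs + θ₀) ds = x₁, y₀ + ∫₀^L sin((1/2)κ's² + κs + θ₀) ds = y₁, and (1/2)κ'L² + κL + θ₀ = θ₁. -/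
/-!
Substituting `s = L τ` turns the angle `κ' s² / 2 + κ s + θ₀` of the clothoid into
`ψ(τ) + φ` with `ψ(τ) = A τ² + (Δθ - A) τ + Δφ`. By hypothesis `∫₀¹ sin ψ = 0` and
`∫₀¹ cos ψ = h` (a shift by `π/2` turns sine into cosine), so the addition formulas give
the displacement `L h (cos φ, sin φ) = r (cos φ, sin φ)`. Taking `τ = 1` gives the final angle.
-/

open Real

/-- Solutions of the `G¹` Hermite interpolation problem: if `A` is a root of
`g(A) = Θ(A; Δθ, Δφ)` and `h = Θ(A; Δθ, Δφ + π/2) ≠ 0`, then the clothoid with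
parameters `L = r/h`, `κ = (Δθ − A)/L`, `κ' = 2A/L²` interpolates the data. -/
theorem clothoid_G1_interpolation
    (x₀ y₀ x₁ y₁ θ₀ θ₁ r φ : ℝ) (hr : 0 < r)
    (hx : x₁ - x₀ = r * Real.cos φ) (hy : y₁ - y₀ = r * Real.sin φ)
    (dθ dφ : ℝ) (hdθ : dθ = θ₁ - θ₀) (hdφ : dφ = θ₀ - φ)
    (A : ℝ) (hA : Theta A dθ dφ = 0)
    (h : ℝ) (hh : h = Theta A dθ (dφ + π/2)) (hne : h ≠ 0)
    (L κ κ' : ℝ) (hL : L = r / h) (hκ : κ = (dθ - A) / L) (hκ' : κ' = 2 * A / L^2) :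
    x₀ + (∫ s in (0:ℝ)..L, Real.cos (1/2 * κ' * s^2 + κ * s + θ₀)) = x₁ ∧
    y₀ + (∫ s in (0:ℝ)..L, Real.sin (1/2 * κ' * s^2 + κ * s + θ₀)) = y₁ ∧
    1/2 * κ' * L^2 + κ * L + θ₀ = θ₁ := by
  have hL0 : L ≠ 0 := by rw [hL]; exact div_ne_zero hr.ne' hne
  have hLh : L * h = r := by rw [hL]; field_simp
  have hS : (∫ τ in (0:ℝ)..1, Real.sin (A * τ^2 + (dθ - A) * τ + dφ)) = 0 := hA
  have hC : (∫ τ in (0:ℝ)..1, Real.cos (A * τ^2 + (dθ - A) * τ + dφ)) = h := by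
    rw [hh, Theta]
    refine intervalIntegral.integral_congr fun τ _ => ?_
    simp only [← add_assoc, Real.sin_add_pi_div_two]
  have hSi : IntervalIntegrable (fun τ : ℝ => Real.sin (A * τ^2 + (dθ - A) * τ + dφ))
      MeasureTheory.volume 0 1 := Continuous.intervalIntegrable (by fun_prop) _ _
  have hCi : IntervalIntegrable (fun τ : ℝ => Real.cos (A * τ^2 + (dθ - A) * τ + dφ))
      MeasureTheory.volume 0 1 := Continuous.intervalIntegrable (by fun_prop) _ _
  have hscale : ∀ f : ℝ → ℝ, (∫ s in (0:ℝ)..L, f s) = L * ∫ τ in (0:ℝ)..1, f (L * τ) := by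
    intro f
    simp
  have harg : ∀ τ : ℝ, 1/2 * κ' * (L * τ)^2 + κ * (L * τ) + θ₀
      = (A * τ^2 + (dθ - A) * τ + dφ) + φ := by
    intro τ
    rw [hκ, hκ', hdφ]
    field_simp
    ring
  refine ⟨?_, ?_, ?_⟩
  · rw [hscale]
    simp only [harg, Real.cos_add _ φ]
    rw [intervalIntegral.integral_sub (hCi.mul_const _) (hSi.mul_const _),
      intervalIntegral.integral_mul_const, intervalIntegral.integral_mul_const, hS, hC]
    linear_combination Real.cos φ * hLh - hx
  · rw [hscale]
    simp only [harg, Real.sin_add _ φ]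
    rw [intervalIntegral.integral_add (hSi.mul_const _) (hCi.mul_const _),
      intervalIntegral.integral_mul_const, intervalIntegral.integral_mul_const, hS, hC]
    linear_combination Real.sin φ * hLh - hy
  · have := harg 1
    rw [mul_one] at this
    rw [this, hdθ, hdφ]
    ring
end

section
/- Let a ≠ 0 and b ∈ ℝ, and set s = a/|a|, z = √(|a|/π), ℓ = s·b/√(π·|a|) and γ = −s·b²/(2|a|). Then X₀(a, b) = z^{−1}·(cos γ·(C(ℓ+z) − C(ℓ)) − s·sin γ·(S(ℓ+z) − S(ℓ))) and Y₀(a, b) = z^{−1}·(sin γ·(C(ℓ+z) − C(ℓ)) + s·cos γ·(S(ℓ+z) − S(ℓ))). -/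
/-!
With `π z² = |a|` and `π z ℓ = s b`, completing the square gives
`a τ² / 2 + b τ = s · (π / 2) (ℓ + z τ)² + γ`. As `s = ±1`, the addition formulas split the
cosine and sine of this phase into combinations of `cos (π u² / 2)` and `sin (π u² / 2)` at
`u = ℓ + z τ`, and the affine substitution `τ ↦ u` turns their integrals over `[0, 1]` into
`z⁻¹` times differences of Fresnel integrals.
-/

open Real

/-- `X_k(a,b,c) = ∫₀¹ τ^k cos(aτ²/2 + bτ + c) dτ`. -/
noncomputable def X (k : ℕ) (a b c : ℝ) : ℝ :=
  ∫ τ in (0:ℝ)..1, τ^k * Real.cos (a/2 * τ^2 + b * τ + c)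

/-- `Y_k(a,b,c) = ∫₀¹ τ^k sin(aτ²/2 + bτ + c) dτ`. -/
noncomputable def Y (k : ℕ) (a b c : ℝ) : ℝ :=
  ∫ τ in (0:ℝ)..1, τ^k * Real.sin (a/2 * τ^2 + b * τ + c)

lemma integral_cos_affine (z ℓ : ℝ) (hz : z ≠ 0) :
    ∫ τ in (0:ℝ)..1, Real.cos (π/2 * (ℓ + z * τ)^2) =
      z⁻¹ * (fresnelC (ℓ + z) - fresnelC ℓ) := by
  have hc : Continuous fun u : ℝ => Real.cos (π/2 * u^2) := by fun_prop
  rw [intervalIntegral.integral_comp_add_mul (fun u => Real.cos (π/2 * u^2)) hz ℓ, fresnelC,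
    fresnelC, intervalIntegral.integral_interval_sub_left (hc.intervalIntegrable _ _)
      (hc.intervalIntegrable _ _)]
  simp

lemma integral_sin_affine (z ℓ : ℝ) (hz : z ≠ 0) :
    ∫ τ in (0:ℝ)..1, Real.sin (π/2 * (ℓ + z * τ)^2) =
      z⁻¹ * (fresnelS (ℓ + z) - fresnelS ℓ) := by
  have hc : Continuous fun u : ℝ => Real.sin (π/2 * u^2) := by fun_prop
  rw [intervalIntegral.integral_comp_add_mul (fun u => Real.sin (π/2 * u^2)) hz ℓ, fresnelS,
    fresnelS, intervalIntegral.integral_interval_sub_left (hc.intervalIntegrable _ _)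
      (hc.intervalIntegrable _ _)]
  simp

/-- Base values `X₀(a,b)` and `Y₀(a,b)` in terms of the standard Fresnel integrals. -/
theorem XY_zero_explicit (a b : ℝ) (ha : a ≠ 0) (s z ℓ γ : ℝ)
    (hs : s = a / |a|) (hz : z = Real.sqrt (|a| / π))
    (hℓ : ℓ = s * b / Real.sqrt (π * |a|)) (hγ : γ = -s * b^2 / (2 * |a|)) :
    X 0 a b 0 = z⁻¹ * (Real.cos γ * (fresnelC (ℓ + z) - fresnelC ℓ) -
      s * Real.sin γ * (fresnelS (ℓ + z) - fresnelS ℓ)) ∧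
    Y 0 a b 0 = z⁻¹ * (Real.sin γ * (fresnelC (ℓ + z) - fresnelC ℓ) +
      s * Real.cos γ * (fresnelS (ℓ + z) - fresnelS ℓ)) := by
  have habs : 0 < |a| := abs_pos.mpr ha
  have hpi : 0 < π := Real.pi_pos
  have hz0 : 0 < z := by rw [hz]; positivity
  have hzsq : π * z^2 = |a| := by
    rw [hz, Real.sq_sqrt (by positivity)]; field_simp
  have hsqrt : Real.sqrt (π * |a|) = π * z := by
    rw [← hzsq, show π * (π * z^2) = (π * z)^2 by ring, Real.sqrt_sq (by positivity)]
  have hsa : s * |a| = a := by rw [hs]; field_simp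
  have hs1 : s = 1 ∨ s = -1 := by
    rcases lt_or_gt_of_ne ha with h | h
    · right; rw [hs, abs_of_neg h]; field_simp
    · left; rw [hs, abs_of_pos h]; field_simp
  have hss : s * s = 1 := by rcases hs1 with h | h <;> rw [h] <;> norm_num
  have hzl : π * z * ℓ = s * b := by rw [hℓ, hsqrt]; field_simp
  have hγ' : γ = -(s * (π/2 * ℓ^2)) := by
    rw [hγ, hℓ, hsqrt, ← hzsq]
    field_simp
    linear_combination b^2 * s * hss
  have phase (τ : ℝ) : a/2 * τ^2 + b * τ + 0 = s * (π/2 * (ℓ + z * τ)^2) + γ := by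
    rw [hγ']
    linear_combination (-τ^2/2) * hsa - (s * τ^2/2) * hzsq - s * τ * hzl - b * τ * hss
  have hcos (θ : ℝ) : Real.cos (s * θ) = Real.cos θ := by
    rcases hs1 with h | h <;> simp [h]
  have hsin (θ : ℝ) : Real.sin (s * θ) = s * Real.sin θ := by
    rcases hs1 with h | h <;> simp [h]
  have hIC : IntervalIntegrable (fun τ : ℝ => Real.cos (π/2 * (ℓ + z * τ)^2))
      MeasureTheory.volume 0 1 := Continuous.intervalIntegrable (by fun_prop) _ _
  have hIS : IntervalIntegrable (fun τ : ℝ => Real.sin (π/2 * (ℓ + z * τ)^2))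
      MeasureTheory.volume 0 1 := Continuous.intervalIntegrable (by fun_prop) _ _
  constructor
  · have hint (τ : ℝ) : τ^0 * Real.cos (a/2 * τ^2 + b * τ + 0) =
        Real.cos γ * Real.cos (π/2 * (ℓ + z * τ)^2) -
          s * Real.sin γ * Real.sin (π/2 * (ℓ + z * τ)^2) := by
      rw [phase, Real.cos_add, hcos, hsin]; ring
    simp only [X, hint]
    rw [intervalIntegral.integral_sub (hIC.const_mul _) (hIS.const_mul _),
      intervalIntegral.integral_const_mul, intervalIntegral.integral_const_mul,
      integral_cos_affine z ℓ hz0.ne', integral_sin_affine z ℓ hz0.ne']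
    ring
  · have hint (τ : ℝ) : τ^0 * Real.sin (a/2 * τ^2 + b * τ + 0) =
        Real.sin γ * Real.cos (π/2 * (ℓ + z * τ)^2) +
          s * Real.cos γ * Real.sin (π/2 * (ℓ + z * τ)^2) := by
      rw [phase, Real.sin_add, hcos, hsin]; ring
    simp only [Y, hint]
    rw [intervalIntegral.integral_add (hIC.const_mul _) (hIS.const_mul _),
      intervalIntegral.integral_const_mul, intervalIntegral.integral_const_mul,
      integral_cos_affine z ℓ hz0.ne', integral_sin_affine z ℓ hz0.ne']
    ring
end

section
/- For all a, b ∈ ℝ and every natural number k, the series Σ_{n=0}^{∞} ((−1)^n/(2n)!)·(a/2)^{2n}·(X_{4n+k}(0, b) − a·Y_{4n+2+k}(0, b)/(2(2n+1))) converges and its sum equals X_k(a, b). -/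
/-! Write `cos(aτ²/2 + bτ) = cos(aτ²/2) cos(bτ) - sin(aτ²/2) sin(bτ)` and expand the two factors
in `aτ²/2` as power series. On `[0,1]` the `n`-th term is bounded by the sum of the `n`-th terms of
the series of `cosh |a/2|` and `sinh |a/2|`, so dominated convergence allows integrating
term by term. -/

open Real

/-- The `n`-th term of the expansion of `τ^k cos(aτ²/2 + bτ)`. -/
noncomputable def seriesTerm (a b : ℝ) (k n : ℕ) (τ : ℝ) : ℝ :=
  τ^k * ((-1)^n * (a/2 * τ^2)^(2*n) / (Nat.factorial (2*n) : ℝ) * Real.cos (b * τ)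
    - (-1)^n * (a/2 * τ^2)^(2*n+1) / (Nat.factorial (2*n+1) : ℝ) * Real.sin (b * τ))

lemma hasSum_seriesTerm (a b : ℝ) (k : ℕ) (τ : ℝ) :
    HasSum (fun n => seriesTerm a b k n τ) (τ^k * Real.cos (a/2 * τ^2 + b * τ + 0)) := by
  rw [add_zero, Real.cos_add]
  exact (((Real.hasSum_cos (a/2 * τ^2)).mul_right _).sub
    ((Real.hasSum_sin (a/2 * τ^2)).mul_right _)).mul_left _

lemma norm_seriesTerm_le (a b : ℝ) (k n : ℕ) {τ : ℝ} (h0 : 0 ≤ τ) (h1 : τ ≤ 1) :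
    ‖seriesTerm a b k n τ‖ ≤ |a/2|^(2*n) / (Nat.factorial (2*n) : ℝ)
      + |a/2|^(2*n+1) / (Nat.factorial (2*n+1) : ℝ) := by
  have hx : |a/2 * τ^2| ≤ |a/2| := by
    rw [abs_mul, abs_of_nonneg (sq_nonneg τ)]
    exact mul_le_of_le_one_right (abs_nonneg _) (pow_le_one₀ h0 h1)
  have key : ∀ (m : ℕ) (t : ℝ), |t| ≤ 1 →
      |(-1)^n * (a/2 * τ^2)^m / (Nat.factorial m : ℝ) * t|
        ≤ |a/2|^m / (Nat.factorial m : ℝ) := by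
    intro m t ht
    rw [abs_mul, abs_div, abs_mul, abs_pow, abs_pow, abs_neg, abs_one, one_pow, one_mul,
      Nat.abs_cast]
    calc _ ≤ |a/2 * τ^2|^m / (Nat.factorial m : ℝ) :=
          mul_le_of_le_one_right (by positivity) ht
      _ ≤ _ := by gcongr
  rw [seriesTerm, Real.norm_eq_abs, abs_mul, abs_of_nonneg (pow_nonneg h0 k)]
  refine (mul_le_of_le_one_left (abs_nonneg _) (pow_le_one₀ h0 h1)).trans ?_
  exact (abs_sub _ _).trans (add_le_add (key _ _ (Real.abs_cos_le_one _))
    (key _ _ (Real.abs_sin_le_one _)))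

lemma integral_seriesTerm (a b : ℝ) (k n : ℕ) :
    ∫ τ in (0:ℝ)..1, seriesTerm a b k n τ =
      ((-1:ℝ)^n / (Nat.factorial (2*n) : ℝ)) * (a/2)^(2*n) *
        (X (4*n+k) 0 b 0 - a * Y (4*n+2+k) 0 b 0 / (2 * (2*(n:ℝ)+1))) := by
  rw [X, Y, mul_div_right_comm, ← intervalIntegral.integral_const_mul,
    ← intervalIntegral.integral_sub, ← intervalIntegral.integral_const_mul]
  · congr 1
    ext τ
    have hf : (Nat.factorial (2*n) : ℝ) ≠ 0 := by positivity
    have hn : (2 * (n:ℝ) + 1) ≠ 0 := by positivity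
    rw [seriesTerm, Nat.factorial_succ]
    push_cast
    simp only [zero_div, zero_mul, zero_add, add_zero]
    field_simp
    ring
  · exact Continuous.intervalIntegrable (by fun_prop) _ _
  · exact Continuous.intervalIntegrable (by fun_prop) _ _

/-- The series `Σₙ ((−1)ⁿ/(2n)!)(a/2)^{2n}(X_{4n+k}(0,b) − a Y_{4n+2+k}(0,b)/(2(2n+1)))`
converges with sum `X_k(a,b)`. -/
theorem X_series (a b : ℝ) (k : ℕ) :
    HasSum
      (fun n : ℕ => ((-1:ℝ)^n / (Nat.factorial (2*n) : ℝ)) * (a/2)^(2*n) *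
        (X (4*n+k) 0 b 0 - a * Y (4*n+2+k) 0 b 0 / (2 * (2*(n:ℝ)+1))))
      (X k a b 0) := by
  simp only [← integral_seriesTerm]
  have hτ : ∀ τ ∈ Set.uIoc (0:ℝ) 1, 0 ≤ τ ∧ τ ≤ 1 := fun τ h => by
    rw [Set.uIoc_of_le zero_le_one] at h
    exact ⟨h.1.le, h.2⟩
  refine intervalIntegral.hasSum_integral_of_dominated_convergence
    (fun n _ => |a/2|^(2*n) / (Nat.factorial (2*n) : ℝ)
      + |a/2|^(2*n+1) / (Nat.factorial (2*n+1) : ℝ)) ?_ ?_ ?_ ?_ ?_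
  · intro n
    have : Continuous (seriesTerm a b k n) := by
      unfold seriesTerm
      fun_prop
    exact this.aestronglyMeasurable
  · exact fun n => .of_forall fun τ h => norm_seriesTerm_le a b k n (hτ τ h).1 (hτ τ h).2
  · exact .of_forall fun _ _ =>
      (Real.hasSum_cosh |a/2|).summable.add (Real.hasSum_sinh |a/2|).summable
  · exact intervalIntegrable_const
  · exact .of_forall fun τ _ => hasSum_seriesTerm a b k τ
end

section
/- For all a, b ∈ ℝ and every natural number k, the series Σ_{n=0}^{∞} ((−1)^n/(2n)!)·(a/2)^{2n}·(Y_{4n+k}(0, b) + a·X_{4n+2+k}(0, b)/(2(2n+1))) converges and its sum equals Y_k(a, b). -/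
/-!
Writing `sin (aτ²/2 + bτ) = cos (aτ²/2) sin (bτ) + sin (aτ²/2) cos (bτ)` and expanding the factors in
`aτ²/2` in their Taylor series, the `n`-th terms of the two expansions combine to the integrand of
the `n`-th term of the claimed series. On `[0, 1]` the two expansions are dominated by the summable
constants `|a/2|^(2n) / (2n)!` and `|a/2|^(2n+1) / (2n+1)!`, so each may be integrated termwise; this
is `hasSum_integral_pow_mul`, applied once with the cosine series and once with the sine series.
-/

open Real

/-- Termwise integration: if the power series with coefficients `c n` and exponents `e n`, evaluated
at `τ²`, sums to `F τ` for every `τ`, and `∑ |c n|` converges, then it may be integrated over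
`[0, 1]` against `τ ^ k * g τ` for any continuous `g` bounded by `1`. -/
lemma hasSum_integral_pow_mul (k : ℕ) (c : ℕ → ℝ) (e : ℕ → ℕ) (F g : ℝ → ℝ)
    (hg : Continuous g) (hg1 : ∀ τ, |g τ| ≤ 1) (hc : Summable fun n => |c n|)
    (hF : ∀ τ, HasSum (fun n => c n * (τ ^ 2) ^ e n) (F τ)) :
    HasSum (fun n => c n * ∫ τ in (0:ℝ)..1, τ ^ (2 * e n + k) * g τ)
      (∫ τ in (0:ℝ)..1, τ ^ k * (F τ * g τ)) := by
  simp_rw [← intervalIntegral.integral_const_mul]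
  refine intervalIntegral.hasSum_integral_of_dominated_convergence (fun n _ => |c n|)
    (fun n => ?_) (fun n => ?_) ?_ ?_ ?_
  · exact Continuous.aestronglyMeasurable (by fun_prop)
  · refine Filter.Eventually.of_forall fun τ hτ => ?_
    rw [Set.uIoc_of_le zero_le_one] at hτ
    rw [Real.norm_eq_abs, abs_mul, abs_mul, abs_pow, abs_of_pos hτ.1]
    have h1 : τ ^ (2 * e n + k) ≤ 1 := pow_le_one₀ hτ.1.le hτ.2
    exact mul_le_of_le_one_right (abs_nonneg _) (mul_le_one₀ h1 (abs_nonneg _) (hg1 τ))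
  · exact Filter.Eventually.of_forall fun _ _ => hc
  · exact intervalIntegrable_const
  · refine Filter.Eventually.of_forall fun τ _ => ?_
    have h := (hF τ).mul_right (τ ^ k * g τ)
    rw [mul_left_comm] at h
    have hn : (fun n => c n * (τ ^ (2 * e n + k) * g τ)) =
        fun n => c n * (τ ^ 2) ^ e n * (τ ^ k * g τ) := by
      funext n
      rw [pow_add, pow_mul]
      ring
    rw [hn]
    exact h

/-- The series `Σₙ ((−1)ⁿ/(2n)!)(a/2)^{2n}(Y_{4n+k}(0,b) + a X_{4n+2+k}(0,b)/(2(2n+1)))`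
converges with sum `Y_k(a,b)`. -/
theorem Y_series (a b : ℝ) (k : ℕ) :
    HasSum
      (fun n : ℕ => ((-1:ℝ)^n / (Nat.factorial (2*n) : ℝ)) * (a/2)^(2*n) *
        (Y (4*n+k) 0 b 0 + a * X (4*n+2+k) 0 b 0 / (2 * (2*(n:ℝ)+1))))
      (Y k a b 0) := by
  have hs := Real.summable_pow_div_factorial |a / 2|
  have h1 := hasSum_integral_pow_mul k
    (fun n => (-1) ^ n * (a / 2) ^ (2 * n) / (Nat.factorial (2 * n) : ℝ)) (fun n => 2 * n)
    (fun τ => Real.cos (a / 2 * τ ^ 2)) (fun τ => Real.sin (b * τ)) (by fun_prop)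
    (fun τ => Real.abs_sin_le_one _)
    (by
      simpa [abs_div, abs_mul, abs_pow, Function.comp_def] using
        hs.comp_injective (i := fun n : ℕ => 2 * n) (fun m n h => by simpa using h))
    (fun τ => by
      convert Real.hasSum_cos (a / 2 * τ ^ 2) using 1
      funext n
      rw [mul_pow]
      ring)
  have h2 := hasSum_integral_pow_mul k
    (fun n => (-1) ^ n * (a / 2) ^ (2 * n + 1) / (Nat.factorial (2 * n + 1) : ℝ))
    (fun n => 2 * n + 1)
    (fun τ => Real.sin (a / 2 * τ ^ 2)) (fun τ => Real.cos (b * τ)) (by fun_prop)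
    (fun τ => Real.abs_cos_le_one _)
    (by
      simpa [abs_div, abs_mul, abs_pow, Function.comp_def] using
        hs.comp_injective (i := fun n : ℕ => 2 * n + 1) (fun m n h => by simpa using h))
    (fun τ => by
      convert Real.hasSum_sin (a / 2 * τ ^ 2) using 1
      funext n
      rw [mul_pow]
      ring)
  convert h1.add h2 using 1
  · funext n
    have e1 : 2 * (2 * n) + k = 4 * n + k := by ring
    have e2 : 2 * (2 * n + 1) + k = 4 * n + 2 + k := by ring
    have hn : (2 * (n : ℝ) + 1) ≠ 0 := by positivity
    have hf : (Nat.factorial (2 * n) : ℝ) ≠ 0 := by positivity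
    simp only [X, Y, e1, e2, zero_div, zero_mul, zero_add, add_zero, Nat.factorial_succ]
    push_cast
    field_simp
    ring
  · rw [Y, ← intervalIntegral.integral_add
      (Continuous.intervalIntegrable (by fun_prop) _ _)
      (Continuous.intervalIntegrable (by fun_prop) _ _)]
    refine intervalIntegral.integral_congr fun τ _ => ?_
    simp only [add_zero, Real.sin_add]
    ring
end

section
/- Let a, b ∈ ℝ with |a| ≤ 1, let k ∈ ℕ and let p ≥ 1 be a natural number. Then the tail of the asymptotic series for X_k satisfies |Σ_{n=p}^{∞} ((−1)^n/(2n)!)·(a/2)^{2n}·(X_{4n+k}(0, b) − a·Y_{4n+2+k}(0, b)/(2(2n+1)))| ≤ (|a|/2)^{2p}·cosh(|a|). -/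
/-!
The moments satisfy `|X_j(0,b)|, |Y_j(0,b)| ≤ 1`, so for `|a| ≤ 1` the bracket of the `n`-th term is
at most `1 + |a|/2 ≤ 2` in absolute value. For `p ≥ 1` the factor `2` is absorbed by the factorial,
since `2 · (2m)! ≤ (2(m+p))!`; hence the term with `n = m + p` is dominated by
`(|a|/2)^(2p) · |a|^(2m)/(2m)!`, and these sum to `(|a|/2)^(2p) · cosh |a|`.
-/

open Real

/-- Bound behind both `|X_k| ≤ 1` and `|Y_k| ≤ 1`. No integrability of `f` is needed. -/
lemma abs_integral_pow_mul_le_one (k : ℕ) (f : ℝ → ℝ) (hf : ∀ t, |f t| ≤ 1) :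
    |∫ τ in (0:ℝ)..1, τ^k * f τ| ≤ 1 := by
  have h := intervalIntegral.norm_integral_le_of_norm_le_const (a := (0:ℝ)) (b := 1) (C := 1)
    (f := fun τ => τ^k * f τ) (by
      intro x hx
      rw [Set.uIoc_of_le zero_le_one] at hx
      rw [Real.norm_eq_abs, abs_mul, abs_pow, abs_of_pos hx.1]
      exact mul_le_one₀ (pow_le_one₀ hx.1.le hx.2) (abs_nonneg _) (hf x))
  simpa using h

lemma abs_X_le_one (k : ℕ) (a b c : ℝ) : |X k a b c| ≤ 1 :=
  abs_integral_pow_mul_le_one k _ fun _ => Real.abs_cos_le_one _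

lemma abs_Y_le_one (k : ℕ) (a b c : ℝ) : |Y k a b c| ≤ 1 :=
  abs_integral_pow_mul_le_one k _ fun _ => Real.abs_sin_le_one _

lemma two_mul_factorial_le (m p : ℕ) (hp : 1 ≤ p) :
    2 * Nat.factorial (2*m) ≤ Nat.factorial (2*(m+p)) := by
  calc 2 * Nat.factorial (2*m) ≤ Nat.factorial (2*m+2) := by
        rw [Nat.factorial_succ, Nat.factorial_succ, ← mul_assoc]
        exact Nat.mul_le_mul_right _ (by nlinarith)
    _ ≤ _ := Nat.factorial_le (by omega)

lemma abs_bracket_le_two (a x y d : ℝ) (ha : |a| ≤ 1) (hx : |x| ≤ 1) (hy : |y| ≤ 1)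
    (hd : 1 ≤ d) : |x - a * y / d| ≤ 2 := by
  have h : |a * y / d| ≤ 1 := by
    rw [abs_div, abs_mul, abs_of_pos (by linarith : 0 < d)]
    exact div_le_one_of_le₀ ((mul_le_one₀ ha (abs_nonneg _) hy).trans hd) (by linarith)
  exact (abs_sub _ _).trans (by linarith)

/-- Tail bound for the asymptotic series of `X_k`: for `|a| ≤ 1` and `p ≥ 1`,
`|Σ_{n=p}^∞ ((−1)ⁿ/(2n)!)(a/2)^{2n}(X_{4n+k}(0,b) − a Y_{4n+2+k}(0,b)/(2(2n+1)))|
  ≤ (|a|/2)^{2p} cosh |a|`. -/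
theorem X_series_tail_bound (a b : ℝ) (ha : |a| ≤ 1) (k p : ℕ) (hp : 1 ≤ p) :
    |∑' m : ℕ, ((-1:ℝ)^(m+p) / (Nat.factorial (2*(m+p)) : ℝ)) * (a/2)^(2*(m+p)) *
        (X (4*(m+p)+k) 0 b 0 -
          a * Y (4*(m+p)+2+k) 0 b 0 / (2 * (2*((m:ℝ)+(p:ℝ))+1)))| ≤
      (|a|/2)^(2*p) * Real.cosh |a| := by
  rw [← Real.norm_eq_abs]
  refine tsum_of_norm_bounded ((Real.hasSum_cosh |a|).mul_left ((|a|/2)^(2*p))) fun m => ?_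
  have hB := abs_bracket_le_two a (X (4*(m+p)+k) 0 b 0) (Y (4*(m+p)+2+k) 0 b 0)
    (2 * (2*((m:ℝ)+(p:ℝ))+1)) ha (abs_X_le_one _ _ _ _) (abs_Y_le_one _ _ _ _)
    (by have : (0:ℝ) ≤ (m:ℝ) + p := by positivity
        linarith)
  have hF : (2:ℝ) * (Nat.factorial (2*m) : ℝ) ≤ (Nat.factorial (2*(m+p)) : ℝ) := by
    exact_mod_cast two_mul_factorial_le m p hp
  have hm : (0:ℝ) < (Nat.factorial (2*m) : ℝ) := by positivity
  have hpow : (|a|/2)^(2*m) ≤ |a|^(2*m) :=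
    pow_le_pow_left₀ (by positivity) (by linarith [abs_nonneg a]) _
  rw [Real.norm_eq_abs, abs_mul, abs_mul, abs_div, abs_pow, abs_pow, abs_div, abs_neg, abs_one,
    one_pow, abs_two, Nat.abs_cast]
  calc _ ≤ 1 / (2 * (Nat.factorial (2*m) : ℝ)) * (|a|/2)^(2*(m+p)) * 2 := by gcongr
    _ = (|a|/2)^(2*p) * ((|a|/2)^(2*m) / (Nat.factorial (2*m) : ℝ)) := by
        rw [mul_add, pow_add]; field_simp
    _ ≤ _ := by gcongr
end
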